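/- Let κ > 0, let ρ_s : ℝⁿ → ℝ be continuously differentiable, nonnegative, and integrable, let f : ℝⁿ → ℝⁿ be continuously differentiable, and let φ₊ : ℝⁿ → ℝ be integrable. Suppose the vector field w(x) = ρ_s(x)·f(x) is integrable with x ↦ ‖Dw(x)‖ integrable, and that the stationary Liouville equation div(ρ_s·f)(x) = φ₊(x) − κ·ρ_s(x) holds for all x ∈ ℝⁿ. Then κ·∫_{ℝⁿ} ρ_s(x) dx = ∫_{ℝⁿ} φ₊(x) dx. -/

import Mathlib

noncomputable section

open MeasureTheory

/-- Divergence of a vector field on `ℝⁿ`: trace of the total derivative. -/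
def diverg {n : ℕ} (w : EuclideanSpace ℝ (Fin n) → EuclideanSpace ℝ (Fin n))
    (y : EuclideanSpace ℝ (Fin n)) : ℝ :=
  LinearMap.trace ℝ (EuclideanSpace ℝ (Fin n)) (fderiv ℝ w y)

/-- The trace as a continuous linear functional on the continuous endomorphisms of a
finite-dimensional space. It lets the trace be exchanged with the Bochner integral. -/
def traceCLM (𝕜 E : Type*) [NontriviallyNormedField 𝕜] [CompleteSpace 𝕜]
    [NormedAddCommGroup E] [NormedSpace 𝕜 E] [FiniteDimensional 𝕜 E] :
    (E →L[𝕜] E) →L[𝕜] 𝕜 :=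
  (LinearMap.trace 𝕜 E ∘ₗ ContinuousLinearMap.coeLM 𝕜).toContinuousLinearMap

section Trace

variable {X E : Type*} [MeasurableSpace X] {ν : Measure X}
  [NormedAddCommGroup E] [NormedSpace ℝ E] [FiniteDimensional ℝ E] {A : X → E →L[ℝ] E}

theorem integrable_trace (hA : Integrable A ν) :
    Integrable (fun x ↦ LinearMap.trace ℝ E (A x)) ν :=
  (traceCLM ℝ E).integrable_comp hA

theorem integral_trace (hA : Integrable A ν) :
    ∫ x, LinearMap.trace ℝ E (A x) ∂ν = LinearMap.trace ℝ E (∫ x, A x ∂ν : E →L[ℝ] E) :=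
  (traceCLM ℝ E).integral_comp_comm hA

end Trace

section Derivative

variable {E F : Type*} [NormedAddCommGroup E] [NormedSpace ℝ E] [FiniteDimensional ℝ E]
  [MeasurableSpace E] [BorelSpace E] {μ : Measure E}
  [NormedAddCommGroup F] [NormedSpace ℝ F]

theorem integrable_norm_fderiv_iff [CompleteSpace F] [SecondCountableTopology F] {w : E → F} :
    Integrable (fun x ↦ ‖fderiv ℝ w x‖) μ ↔ Integrable (fderiv ℝ w) μ :=
  integrable_norm_iff (measurable_fderiv ℝ w).aestronglyMeasurable

variable [μ.IsAddHaarMeasure]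

theorem integral_fderiv_apply_eq_zero {w : E → F} {v : E} (hw : Differentiable ℝ w)
    (hw_int : Integrable w μ) (hwv_int : Integrable (fun x ↦ fderiv ℝ w x v) μ) :
    ∫ x, fderiv ℝ w x v ∂μ = 0 := by
  have parts := integral_smul_fderiv_eq_neg_fderiv_smul_of_integrable
    (μ := μ) (f := fun _ ↦ (1 : ℝ)) (g := w) (v := v)
    (by simp) (by simpa using hwv_int) (by simpa using hw_int)
    (fun _ _ ↦ differentiableAt_const _) (fun x _ ↦ hw x)
  simpa using parts

theorem integral_fderiv_eq_zero {w : E → F} (hw : Differentiable ℝ w)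
    (hw_int : Integrable w μ) (hDw_int : Integrable (fderiv ℝ w) μ) :
    ∫ x, fderiv ℝ w x ∂μ = 0 := by
  ext v
  rw [ContinuousLinearMap.integral_apply hDw_int, zero_apply]
  exact integral_fderiv_apply_eq_zero hw hw_int (hDw_int.apply_continuousLinearMap v)

theorem integral_trace_fderiv_eq_zero {w : E → E} (hw : Differentiable ℝ w)
    (hw_int : Integrable w μ) (hDw_int : Integrable (fderiv ℝ w) μ) :
    ∫ x, LinearMap.trace ℝ E (fderiv ℝ w x) ∂μ = 0 := by
  rw [integral_trace hDw_int, integral_fderiv_eq_zero hw hw_int hDw_int,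
    ContinuousLinearMap.toLinearMap_zero, map_zero]

theorem stationary_mass_balance_general {κ : ℝ} {ρ φ : E → ℝ} {f : E → E}
    (hρ_int : Integrable ρ μ) (hw : Differentiable ℝ fun x ↦ ρ x • f x)
    (hw_int : Integrable (fun x ↦ ρ x • f x) μ)
    (hDw_int : Integrable (fderiv ℝ fun x ↦ ρ x • f x) μ)
    (hliouville : ∀ᵐ x ∂μ,
      LinearMap.trace ℝ E (fderiv ℝ (fun y ↦ ρ y • f y) x) = φ x - κ * ρ x) :
    Integrable φ μ ∧ κ * ∫ x, ρ x ∂μ = ∫ x, φ x ∂μ := by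
  have hdiv_int := integrable_trace hDw_int
  have hκρ_int : Integrable (fun x ↦ κ * ρ x) μ := hρ_int.const_mul κ
  have hφ : (fun x ↦ LinearMap.trace ℝ E (fderiv ℝ (fun y ↦ ρ y • f y) x) + κ * ρ x) =ᵐ[μ] φ := by
    filter_upwards [hliouville] with x hx
    rw [hx, sub_add_cancel]
  refine ⟨(hdiv_int.add hκρ_int).congr hφ, ?_⟩
  rw [← integral_congr_ae hφ, integral_add hdiv_int hκρ_int,
    integral_trace_fderiv_eq_zero hw hw_int hDw_int, zero_add, integral_const_mul]

end Derivative

/-- Total mass balance for a stationary density: if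
`∇·(ρ_s f) = φ₊ − κ ρ_s` on all of `ℝⁿ`, then `κ ∫ ρ_s = ∫ φ₊`. -/
theorem stationary_mass_balance {n : ℕ} (κ : ℝ) (hκ : 0 < κ)
    (ρs : EuclideanSpace ℝ (Fin n) → ℝ)
    (hρs : ContDiff ℝ 1 ρs) (hρs_nonneg : ∀ x, 0 ≤ ρs x)
    (hρs_int : Integrable ρs)
    (f : EuclideanSpace ℝ (Fin n) → EuclideanSpace ℝ (Fin n))
    (hf : ContDiff ℝ 1 f)
    (φp : EuclideanSpace ℝ (Fin n) → ℝ) (hφp_int : Integrable φp)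
    (hw_int : Integrable (fun x => ρs x • f x))
    (hDw_int : Integrable (fun x => ‖fderiv ℝ (fun y => ρs y • f y) x‖))
    (hliouville : ∀ x, diverg (fun y => ρs y • f y) x = φp x - κ * ρs x) :
    κ * ∫ x, ρs x = ∫ x, φp x :=
  (stationary_mass_balance_general hρs_int ((hρs.smul hf).differentiable one_ne_zero) hw_int
    (integrable_norm_fderiv_iff.mp hDw_int) (.of_forall hliouville)).2
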